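/- Let A_{12}, A^1_1, A^2_1, A^1_2, A^2_2, A^{12} : ℝ^5 → ℝ be smooth functions of the coordinates (x_1, x_2, z, p_1, p_2), and let Ψ be the differential 2-form on ℝ^5 given by Ψ = A_{12} dx_1∧dx_2 + A^1_1 dx_1∧dp_1 + A^2_1 dx_1∧dp_2 + A^1_2 dx_2∧dp_1 + A^2_2 dx_2∧dp_2 + A^{12} dp_1∧dp_2. For a smooth function z : ℝ² → ℝ, let ι : ℝ² → ℝ^5 be the 1-jet section ι(x_1,x_2) = (x_1, x_2, z(x), z_{x_1}(x), z_{x_2}(x)). Then ι*Ψ vanishes identically if and only if z satisfies the classical Monge–Ampère equation A z_{x_1x_1} + 2B z_{x_1x_2} + C z_{x_2x_2} + D + E(z_{x_1x_1} z_{x_2x_2} − z_{x_1x_2}²) = 0 on ℝ², where A := −A^1_2 ∘ ι, B := ((A^1_1 − A^2_2)/2) ∘ ι, C := A^2_1 ∘ ι, D := A_{12} ∘ ι, E := A^{12} ∘ ι. -/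

import Mathlib

/-!
The differential of the jet section sends `v` to `(v₁, v₂, dz(v), d(z_{x₁})(v), d(z_{x₂})(v))`, so
every term of `ι*Ψ` is an explicit `2 × 2` determinant in the components of two tangent vectors.
Expanding, and using `z_{x₁x₂} = z_{x₂x₁}`, gives `ι*Ψ = M(z) dx₁∧dx₂` with `M(z)` the left-hand
side of the Monge–Ampère equation. This form vanishes exactly where `M(z)` does, as one sees by
evaluating it on the standard basis.
-/

noncomputable section
namespace GMAE

/-- first-order partial derivative in the direction `x_i` -/
noncomputable def pd {n : ℕ} (i : Fin n) (f : (Fin n → ℝ) → ℝ) : (Fin n → ℝ) → ℝ :=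
  fun x => fderiv ℝ f x (Pi.single i 1)

/-- the wedge product `θ_1 ∧ ⋯ ∧ θ_l` of `1`-forms: `(w_1,…,w_l) ↦ det (θ_a (w_b))` -/
noncomputable def wedge {E : Type*} [AddCommGroup E] [Module ℝ E] {l : ℕ}
    (θ : Fin l → (E →ₗ[ℝ] ℝ)) : E [⋀^Fin l]→ₗ[ℝ] ℝ :=
  Matrix.detRowAlternating.compLinearMap (LinearMap.pi θ)

/-- pullback of a differential `l`-form along `ι` -/
noncomputable def pullback {E F : Type*} [NormedAddCommGroup E] [NormedSpace ℝ E]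
    [NormedAddCommGroup F] [NormedSpace ℝ F] {l : ℕ}
    (ι : E → F) (Ψ : F → (F [⋀^Fin l]→ₗ[ℝ] ℝ)) (x : E) : E [⋀^Fin l]→ₗ[ℝ] ℝ :=
  (Ψ (ι x)).compLinearMap (fderiv ℝ ι x).toLinearMap

/-- the coordinate `1`-form on `ℝ^N` dual to the `i`-th coordinate -/
def P {N : ℕ} (i : Fin N) : (Fin N → ℝ) →ₗ[ℝ] ℝ := LinearMap.proj i

lemma wedge_pair_apply {E : Type*} [AddCommGroup E] [Module ℝ E] (a b : E →ₗ[ℝ] ℝ)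
    (v : Fin 2 → E) : wedge ![a, b] v = a (v 0) * b (v 1) - a (v 1) * b (v 0) := by
  change Matrix.det (Matrix.of fun i j => ![a, b] j (v i)) = _
  rw [Matrix.det_fin_two]
  simp
  ring

lemma contDiff_pd {n : ℕ} (i : Fin n) {f : (Fin n → ℝ) → ℝ} (hf : ContDiff ℝ (⊤ : ℕ∞) f) :
    ContDiff ℝ (⊤ : ℕ∞) (pd i f) :=
  (hf.fderiv_right (m := (⊤ : ℕ∞)) (by simp)).clm_apply contDiff_const

lemma pd_comm {n : ℕ} (i j : Fin n) {f : (Fin n → ℝ) → ℝ} (hf : ContDiff ℝ (⊤ : ℕ∞) f)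
    (x : Fin n → ℝ) : pd i (pd j f) x = pd j (pd i f) x := by
  have hd : DifferentiableAt ℝ (fderiv ℝ f) x :=
    ((hf.fderiv_right (m := (⊤ : ℕ∞)) (by simp)).differentiable (by simp)) x
  have h (k l : Fin n) :
      pd k (pd l f) x = fderiv ℝ (fderiv ℝ f) x (Pi.single k 1) (Pi.single l 1) := by
    change fderiv ℝ (fun y => fderiv ℝ f y (Pi.single l 1)) x (Pi.single k 1) = _
    rw [fderiv_clm_apply hd (by fun_prop)]
    simp
  rw [h, h]
  exact (hf.contDiffAt.isSymmSndFDerivAt (by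
    simpa using (WithTop.coe_le_coe.2 le_top : ((2 : ℕ∞) : WithTop ℕ∞) ≤ ((⊤ : ℕ∞) : WithTop ℕ∞)))) _ _

lemma fderiv_eq_pd (f : (Fin 2 → ℝ) → ℝ) (x v : Fin 2 → ℝ) :
    fderiv ℝ f x v = v 0 * pd 0 f x + v 1 * pd 1 f x := by
  have hv : v = v 0 • Pi.single 0 1 + v 1 • Pi.single 1 1 := by
    ext i; fin_cases i <;> simp
  conv_lhs => rw [hv]
  simp [pd]

lemma fderiv_jet {z : (Fin 2 → ℝ) → ℝ} (hz : ContDiff ℝ (⊤ : ℕ∞) z) (x v : Fin 2 → ℝ) :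
    fderiv ℝ (fun x => ![x 0, x 1, z x, pd 0 z x, pd 1 z x]) x v =
      ![v 0, v 1, fderiv ℝ z x v, fderiv ℝ (pd 0 z) x v, fderiv ℝ (pd 1 z) x v] := by
  have hd {f : (Fin 2 → ℝ) → ℝ} (hf : ContDiff ℝ (⊤ : ℕ∞) f) : HasFDerivAt f (fderiv ℝ f x) x :=
    (hf.differentiable (by simp) x).hasFDerivAt
  have h : HasFDerivAt (fun x : Fin 2 → ℝ => ![x 0, x 1, z x, pd 0 z x, pd 1 z x])
      (ContinuousLinearMap.pi ![ContinuousLinearMap.proj 0, ContinuousLinearMap.proj 1,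
        fderiv ℝ z x, fderiv ℝ (pd 0 z) x, fderiv ℝ (pd 1 z) x]) x := by
    rw [hasFDerivAt_pi']
    intro i
    fin_cases i
    · exact hasFDerivAt_apply 0 x
    · exact hasFDerivAt_apply 1 x
    · exact hd hz
    · exact hd (contDiff_pd 0 hz)
    · exact hd (contDiff_pd 1 hz)
  rw [h.fderiv]
  ext i
  fin_cases i <;> rfl

/-- For `Ψ = A₁₂ dx₁∧dx₂ + A¹₁ dx₁∧dp₁ + A²₁ dx₁∧dp₂ + A¹₂ dx₂∧dp₁ +
A²₂ dx₂∧dp₂ + A¹² dp₁∧dp₂` on `ℝ⁵ = J¹(2,1)` (coordinates `(x₁,x₂,z,p₁,p₂)`),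
the pullback of `Ψ` along the `1`-jet section of `z` vanishes identically iff `z` solves
the classical Monge–Ampère equation
`A z_{x₁x₁} + 2B z_{x₁x₂} + C z_{x₂x₂} + D + E(z_{x₁x₁}z_{x₂x₂} − z_{x₁x₂}²) = 0` with
`A = −A¹₂∘ι`, `B = ((A¹₁ − A²₂)/2)∘ι`, `C = A²₁∘ι`, `D = A₁₂∘ι`, `E = A¹²∘ι`. -/
theorem statement7 (A12 A11 A21 A12' A22 Atop : (Fin 5 → ℝ) → ℝ)
    (hA12 : ContDiff ℝ (⊤ : ℕ∞) A12) (hA11 : ContDiff ℝ (⊤ : ℕ∞) A11) (hA21 : ContDiff ℝ (⊤ : ℕ∞) A21)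
    (hA12' : ContDiff ℝ (⊤ : ℕ∞) A12') (hA22 : ContDiff ℝ (⊤ : ℕ∞) A22) (hAtop : ContDiff ℝ (⊤ : ℕ∞) Atop)
    (z : (Fin 2 → ℝ) → ℝ) (hz : ContDiff ℝ (⊤ : ℕ∞) z)
    (ι : (Fin 2 → ℝ) → (Fin 5 → ℝ))
    (hι : ι = fun x => ![x 0, x 1, z x, pd 0 z x, pd 1 z x])
    (Ψ : (Fin 5 → ℝ) → ((Fin 5 → ℝ) [⋀^Fin 2]→ₗ[ℝ] ℝ))
    (hΨ : Ψ = fun u =>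
      A12 u • wedge ![P 0, P 1] + A11 u • wedge ![P 0, P 3] + A21 u • wedge ![P 0, P 4] +
      A12' u • wedge ![P 1, P 3] + A22 u • wedge ![P 1, P 4] + Atop u • wedge ![P 3, P 4]) :
    (∀ (x : Fin 2 → ℝ) (v : Fin 2 → (Fin 2 → ℝ)), pullback ι Ψ x v = 0) ↔
    (∀ x : Fin 2 → ℝ,
      (-(A12' (ι x))) * pd 0 (pd 0 z) x +
      2 * ((A11 (ι x) - A22 (ι x)) / 2) * pd 1 (pd 0 z) x +
      A21 (ι x) * pd 1 (pd 1 z) x + A12 (ι x) +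
      Atop (ι x) * (pd 0 (pd 0 z) x * pd 1 (pd 1 z) x - (pd 1 (pd 0 z) x) ^ 2) = 0) := by
  -- The factor in the last line is `(dx₁∧dx₂)(v 0, v 1)`.
  have key (x : Fin 2 → ℝ) (v : Fin 2 → (Fin 2 → ℝ)) : pullback ι Ψ x v =
      ((-(A12' (ι x))) * pd 0 (pd 0 z) x +
      2 * ((A11 (ι x) - A22 (ι x)) / 2) * pd 1 (pd 0 z) x +
      A21 (ι x) * pd 1 (pd 1 z) x + A12 (ι x) +
      Atop (ι x) * (pd 0 (pd 0 z) x * pd 1 (pd 1 z) x - (pd 1 (pd 0 z) x) ^ 2)) *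
      (v 0 0 * v 1 1 - v 1 0 * v 0 1) := by
    have hD (w : Fin 2 → ℝ) : fderiv ℝ ι x w =
        ![w 0, w 1, fderiv ℝ z x w, fderiv ℝ (pd 0 z) x w, fderiv ℝ (pd 1 z) x w] := by
      rw [hι]; exact fderiv_jet hz x w
    rw [pullback, hΨ]
    simp only [AlternatingMap.compLinearMap_apply, AlternatingMap.add_apply,
      AlternatingMap.smul_apply, wedge_pair_apply, P, LinearMap.proj_apply,
      ContinuousLinearMap.coe_coe, hD, smul_eq_mul]
    simp only [Matrix.cons_val, fderiv_eq_pd, pd_comm 0 1 hz x]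
    ring
  refine ⟨fun h x => ?_, fun h x v => ?_⟩
  · simpa [key] using h x ![![1, 0], ![0, 1]]
  · rw [key, h x, zero_mul]

end GMAE
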